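/- Let W be a finite reflection group with root system Φ, a a generic point, Φ⁺ = {α ∈ Φ : ⟨a,α⟩ > 0}, and Δ a simple system for Φ⁺. For I ⊆ Δ let W_I be the subgroup of W generated by {s_α : α ∈ I} and F_I = conv{u(a) : u ∈ W_I}. Then for all w, g ∈ W and I ⊆ Δ: w(F_I) = g(F_I) if and only if w⁻¹g ∈ W_I (equivalently, wW_I = gW_I). -/

import Mathlib

/-!
The orbit of `a` under any group of isometries lies on a sphere, and a point of a sphere is an
extreme point of the ball it bounds. Hence if `u = w⁻¹ g` maps `F_I` onto itself, the point `u a`,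
lying on that sphere and in the convex hull of the orbit `W_I a`, already belongs to the orbit:
`u a = v a` with `v ∈ W_I`. It remains to see that a generic point has trivial stabilizer in `W`
(`eq_one_of_fixes`), for then `u = v`.

For the stabilizer, a reflection along a simple root `α` permutes the positive roots other than `α`
(`rootRefl_pos`). Two consequences follow.

* Simple reflections generate `W` (`le_genSubgroup`): in the orbit of a positive root under the
  group they generate, a positive root `γ` minimizing `⟪a, γ⟫` is simple.
* The exchange property (`exchange`): if a product `x` of `n` simple reflections sends the simple
  root `α` to a negative root, then `x s_α` is a product of `n - 1` simple reflections.

An element fixing `a` preserves positivity of roots, so by the exchange property any nonempty word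
in simple reflections representing it can be shortened by two letters; thus it is the identity.
-/

open scoped RealInnerProductSpace

variable {V : Type*} [NormedAddCommGroup V] [InnerProductSpace ℝ V]

/-- `s` acts as the orthogonal reflection along the nonzero vector `α`:
`s v = v - 2 (⟪v,α⟫/⟪α,α⟫) α`. -/
def IsReflAlong (s : V ≃ₗᵢ[ℝ] V) (α : V) : Prop :=
  α ≠ 0 ∧ ∀ v : V, s v = v - ((2 * ⟪v, α⟫ / ⟪α, α⟫) • α)

/-- `s` is a reflection. -/
def IsReflection (s : V ≃ₗᵢ[ℝ] V) : Prop :=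
  ∃ α : V, IsReflAlong s α

/-- A reflection group: a subgroup of the group of linear isometries of `V` generated by
the reflections it contains. -/
def IsReflectionGroup (W : Subgroup (V ≃ₗᵢ[ℝ] V)) : Prop :=
  W = Subgroup.closure {s | IsReflection s ∧ s ∈ W}

/-- `a` is a generic point for `W`: it is fixed by no reflection belonging to `W`. -/
def IsGeneric (W : Subgroup (V ≃ₗᵢ[ℝ] V)) (a : V) : Prop :=
  ∀ s ∈ W, IsReflection s → s a ≠ a

/-- The `W`-orbit of the point `a`. -/
def orbitSet (W : Subgroup (V ≃ₗᵢ[ℝ] V)) (a : V) : Set V :=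
  {x | ∃ w ∈ W, x = w a}

/-- The permutahedron `Perm^a(W)`: the convex hull of the `W`-orbit of `a`. -/
noncomputable def permutahedron (W : Subgroup (V ≃ₗᵢ[ℝ] V)) (a : V) : Set V :=
  convexHull ℝ (orbitSet W a)

/-- A root system for `W`. -/
structure IsRootSystem (W : Subgroup (V ≃ₗᵢ[ℝ] V)) (Φ : Set V) : Prop where
  finite : Φ.Finite
  nonempty : Φ.Nonempty
  ne_zero : ∀ α ∈ Φ, α ≠ 0
  gen : W = Subgroup.closure {s | ∃ α ∈ Φ, IsReflAlong s α}
  line : ∀ α ∈ Φ, {β ∈ Φ | ∃ t : ℝ, β = t • α} = {α, -α}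
  stable : ∀ w ∈ W, (⇑w) '' Φ = Φ

/-- The positive system determined by the generic point `a`: roots `α` with `⟪a, α⟫ > 0`. -/
def posSystem (a : V) (Φ : Set V) : Set V :=
  {α ∈ Φ | 0 < ⟪a, α⟫}

/-- `Δ` is a simple system for the positive system `Φp`: `Δ ⊆ Φp` is linearly independent and
every element of `Φp` is a linear combination of `Δ` with nonnegative coefficients. -/
def IsSimpleSystem (Φp Δ : Set V) : Prop :=
  Δ ⊆ Φp ∧ LinearIndependent ℝ ((↑) : Δ → V) ∧
    ∀ β ∈ Φp, ∃ c : V →₀ ℝ, (c.support : Set V) ⊆ Δ ∧ (∀ v : V, 0 ≤ c v) ∧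
      β = c.sum fun v r => r • v

/-- The subgroup generated by the reflections along the vectors of `I`. -/
def genSubgroup (I : Set V) : Subgroup (V ≃ₗᵢ[ℝ] V) :=
  Subgroup.closure {s | ∃ β ∈ I, IsReflAlong s β}

/-! ### Reflections and words in reflections -/

lemma isometry_mul_apply (x y : V ≃ₗᵢ[ℝ] V) (v : V) : (x * y) v = x (y v) := rfl

/-- The orthogonal reflection in the hyperplane `αᗮ` (the identity when `α = 0`). -/
noncomputable def rootRefl (α : V) : V ≃ₗᵢ[ℝ] V := (ℝ ∙ α)ᗮ.reflection

lemma rootRefl_apply (α v : V) : rootRefl α v = v - ((2 * ⟪v, α⟫ / ⟪α, α⟫) • α) := by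
  rw [rootRefl, Submodule.reflection_orthogonal_apply, Submodule.reflection_singleton_apply,
    real_inner_self_eq_norm_sq, real_inner_comm, two_nsmul, neg_sub, ← add_smul]
  simp only [RCLike.ofReal_real_eq_id, id_eq]
  congr 2
  ring

lemma isReflAlong_rootRefl {α : V} (h : α ≠ 0) : IsReflAlong (rootRefl α) α :=
  ⟨h, rootRefl_apply α⟩

lemma IsReflAlong.eq_rootRefl {s : V ≃ₗᵢ[ℝ] V} {α : V} (h : IsReflAlong s α) : s = rootRefl α := by
  ext v
  rw [h.2, rootRefl_apply]

lemma rootRefl_mul_self (α : V) : rootRefl α * rootRefl α = 1 := Submodule.reflection_mul_reflection _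

lemma rootRefl_self (α : V) : rootRefl α α = -α :=
  Submodule.reflection_orthogonalComplement_singleton_eq_neg α

lemma rootRefl_neg (α : V) : rootRefl (-α) = rootRefl α := by
  ext v
  simp [rootRefl_apply, neg_div]

lemma rootRefl_image (x : V ≃ₗᵢ[ℝ] V) (α : V) : rootRefl (x α) = x * rootRefl α * x⁻¹ := by
  ext v
  have h : x (x⁻¹ v) = v := by rw [← isometry_mul_apply, mul_inv_cancel]; rfl
  have h2 : ⟪v, x α⟫ = ⟪x⁻¹ v, α⟫ := by
    rw [← x.inner_map_map (x⁻¹ v) α, h]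
  rw [isometry_mul_apply, isometry_mul_apply, rootRefl_apply, rootRefl_apply, map_sub,
    map_smul, h, h2, x.inner_map_map]

lemma genSubgroup_mono {I J : Set V} (h : I ⊆ J) : genSubgroup I ≤ genSubgroup J :=
  Subgroup.closure_mono fun _ ⟨β, hβ, hs⟩ => ⟨β, h hβ, hs⟩

/-- Elements of `genSubgroup Δ` are words in the reflections along `Δ`; inverses are not needed
since reflections are involutions. -/
lemma exists_word {Δ : Set V} {x : V ≃ₗᵢ[ℝ] V} (hx : x ∈ genSubgroup Δ) :
    ∃ L : List V, (∀ α ∈ L, α ∈ Δ) ∧ (L.map rootRefl).prod = x := by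
  induction hx using Subgroup.closure_induction with
  | mem s hs =>
    obtain ⟨β, hβ, hs⟩ := hs
    exact ⟨[β], by simpa using hβ, by simp [hs.eq_rootRefl]⟩
  | one => exact ⟨[], by simp, by simp⟩
  | mul x y _ _ hx hy =>
    obtain ⟨L, hL, rfl⟩ := hx
    obtain ⟨M, hM, rfl⟩ := hy
    refine ⟨L ++ M, ?_, by simp⟩
    intro α hα
    rcases List.mem_append.1 hα with h | h
    exacts [hL α h, hM α h]
  | inv x _ hx =>
    obtain ⟨L, hL, rfl⟩ := hx
    refine ⟨L.reverse, by simpa using hL, ?_⟩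
    rw [List.prod_inv_reverse, List.map_reverse, List.map_map]
    congr 2

/-! ### Simple reflections and the stabilizer of a generic point -/

section RootSystem

variable {W : Subgroup (V ≃ₗᵢ[ℝ] V)} {Φ Δ : Set V} {a : V}

lemma IsRootSystem.rootRefl_mem (hΦ : IsRootSystem W Φ) {α : V} (hα : α ∈ Φ) : rootRefl α ∈ W := by
  rw [hΦ.gen]
  exact Subgroup.subset_closure ⟨α, hα, isReflAlong_rootRefl (hΦ.ne_zero α hα)⟩

lemma IsRootSystem.map_mem (hΦ : IsRootSystem W Φ) {x : V ≃ₗᵢ[ℝ] V} (hx : x ∈ W) {α : V}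
    (hα : α ∈ Φ) : x α ∈ Φ := by
  rw [← hΦ.stable x hx]
  exact ⟨α, hα, rfl⟩

lemma IsRootSystem.neg_mem (hΦ : IsRootSystem W Φ) {α : V} (hα : α ∈ Φ) : -α ∈ Φ := by
  rw [← rootRefl_self]
  exact hΦ.map_mem (hΦ.rootRefl_mem hα) hα

lemma IsRootSystem.inner_ne_zero (hΦ : IsRootSystem W Φ) (ha : IsGeneric W a) {α : V}
    (hα : α ∈ Φ) : ⟪a, α⟫ ≠ 0 := by
  intro h
  refine ha _ (hΦ.rootRefl_mem hα) ⟨α, isReflAlong_rootRefl (hΦ.ne_zero α hα)⟩ ?_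
  simp [rootRefl_apply, h]

lemma IsRootSystem.eq_of_smul (hΦ : IsRootSystem W Φ) {α β : V} (hα : α ∈ posSystem a Φ)
    (hβ : β ∈ posSystem a Φ) {t : ℝ} (h : β = t • α) : β = α := by
  have : β ∈ ({α, -α} : Set V) := by
    rw [← hΦ.line α hα.1]
    exact ⟨hβ.1, t, h⟩
  rcases this with h | h
  · exact h
  · rw [Set.mem_singleton_iff] at h
    have h1 := hα.2
    have h2 := hβ.2
    rw [h, inner_neg_right] at h2
    linarith

/-- A simple reflection `s_α` permutes the positive roots other than `α`. If `s_α β = β - t α` were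
negative, then `β` and `-s_α β` would be nonnegative combinations of simple roots summing to `t α`,
so linear independence would force `β` to be a multiple of `α`. -/
lemma rootRefl_pos (hΦ : IsRootSystem W Φ) (ha : IsGeneric W a)
    (hΔ : IsSimpleSystem (posSystem a Φ) Δ) {α β : V} (hα : α ∈ Δ) (hβ : β ∈ posSystem a Φ)
    (hne : β ≠ α) : 0 < ⟪a, rootRefl α β⟫ := by
  by_contra hneg
  have hαp := hΔ.1 hα
  have hmem : rootRefl α β ∈ Φ := hΦ.map_mem (hΦ.rootRefl_mem hαp.1) hβ.1
  have hlt : ⟪a, rootRefl α β⟫ < 0 := lt_of_le_of_ne (not_lt.1 hneg) (hΦ.inner_ne_zero ha hmem)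
  have hn : -rootRefl α β ∈ posSystem a Φ := ⟨hΦ.neg_mem hmem, by rw [inner_neg_right]; linarith⟩
  obtain ⟨c, hcs, hc0, hc⟩ := hΔ.2.2 β hβ
  obtain ⟨d, hds, hd0, hd⟩ := hΔ.2.2 _ hn
  set t := 2 * ⟪β, α⟫ / ⟪α, α⟫
  have hcd : c + d = Finsupp.single α t := by
    refine linearIndepOn_iffₛ.1 (linearIndependent_subtype_iff.1 hΔ.2.1) _
      (add_mem ((Finsupp.mem_supported ℝ c).2 hcs) ((Finsupp.mem_supported ℝ d).2 hds)) _
      (Finsupp.single_mem_supported ℝ t hα) ?_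
    rw [map_add, Finsupp.linearCombination_single, Finsupp.linearCombination_apply,
      Finsupp.linearCombination_apply]
    simp only [id_eq]
    rw [← hc, ← hd, rootRefl_apply]
    abel
  refine hne (hΦ.eq_of_smul hαp hβ (t := c α) ?_)
  have hcz : ∀ γ, γ ≠ α → c γ = 0 := by
    intro γ hγ
    have := DFunLike.congr_fun hcd γ
    rw [Finsupp.add_apply, Finsupp.single_eq_of_ne hγ] at this
    linarith [hc0 γ, hd0 γ]
  conv_lhs => rw [hc]
  refine Finsupp.sum_eq_single α (fun γ _ hγ => ?_) (fun _ => zero_smul _ _)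
  rw [hcz γ hγ, zero_smul]

/-- `W` is generated by the simple reflections. -/
lemma le_genSubgroup (hΦ : IsRootSystem W Φ) (ha : IsGeneric W a)
    (hΔ : IsSimpleSystem (posSystem a Φ) Δ) : W ≤ genSubgroup Δ := by
  have hsimple : ∀ α ∈ Δ, rootRefl α ∈ genSubgroup Δ := fun α hα =>
    Subgroup.subset_closure ⟨α, hα, isReflAlong_rootRefl (hΦ.ne_zero α (hΔ.1 hα).1)⟩
  have hpos : ∀ β ∈ posSystem a Φ, rootRefl β ∈ genSubgroup Δ := by
    intro β hβ
    obtain ⟨γ, ⟨⟨u, hu, huγ⟩, hγ⟩, hmin⟩ := Set.exists_min_image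
      {γ : V | (∃ u ∈ genSubgroup Δ, u β = γ) ∧ γ ∈ posSystem a Φ} (fun γ => ⟪a, γ⟫)
      (hΦ.finite.subset fun γ hγ => hγ.2.1) ⟨β, ⟨1, one_mem _, rfl⟩, hβ⟩
    -- A root `γ` of minimal height in the orbit is simple: otherwise reflecting it along a simple
    -- root `α` with `⟪γ, α⟫ > 0` lowers the height and keeps it positive.
    have hγΔ : γ ∈ Δ := by
      obtain ⟨c, hcs, hc0, hc⟩ := hΔ.2.2 γ hγ
      obtain ⟨α, hα, hαγ⟩ : ∃ α ∈ Δ, 0 < ⟪γ, α⟫ := by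
        by_contra! hcon
        have h1 : ⟪γ, γ⟫ ≤ 0 := by
          conv_lhs => arg 3; rw [hc]
          rw [Finsupp.sum, inner_sum]
          refine Finset.sum_nonpos fun v hv => ?_
          rw [inner_smul_right]
          exact mul_nonpos_of_nonneg_of_nonpos (hc0 v) (hcon v (hcs hv))
        exact absurd (real_inner_self_pos.2 (hΦ.ne_zero γ hγ.1)) (not_lt.2 h1)
      by_cases hne : γ = α
      · rwa [hne]
      · exfalso
        have hαp := hΔ.1 hα
        have hp := rootRefl_pos hΦ ha hΔ hα hγ hne
        have hle := hmin (rootRefl α γ) ⟨⟨rootRefl α * u, mul_mem (hsimple α hα) hu, by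
          rw [isometry_mul_apply, huγ]⟩, hΦ.map_mem (hΦ.rootRefl_mem hαp.1) hγ.1, hp⟩
        rw [rootRefl_apply, inner_sub_right, inner_smul_right] at hle
        have : 0 < 2 * ⟪γ, α⟫ / ⟪α, α⟫ * ⟪a, α⟫ :=
          mul_pos (div_pos (by linarith) (real_inner_self_pos.2 (hΦ.ne_zero α hαp.1))) hαp.2
        linarith
    have h := hsimple γ hγΔ
    rw [← huγ, rootRefl_image] at h
    have h2 := mul_mem (mul_mem (inv_mem hu) h) hu
    simpa [mul_assoc] using h2
  rw [hΦ.gen, Subgroup.closure_le]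
  rintro s ⟨β, hβ, hs⟩
  rw [hs.eq_rootRefl]
  rcases lt_or_gt_of_ne (hΦ.inner_ne_zero ha hβ) with h | h
  · rw [← rootRefl_neg]
    exact hpos _ ⟨hΦ.neg_mem hβ, by rw [inner_neg_right]; linarith⟩
  · exact hpos _ ⟨hβ, h⟩

lemma word_mem (hΦ : IsRootSystem W Φ) (hΔ : IsSimpleSystem (posSystem a Φ) Δ) (L : List V)
    (hL : ∀ β ∈ L, β ∈ Δ) : (L.map rootRefl).prod ∈ W := by
  refine list_prod_mem fun x hx => ?_
  obtain ⟨β, hβ, rfl⟩ := List.mem_map.1 hx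
  exact hΦ.rootRefl_mem (hΔ.1 (hL β hβ)).1

/-- The exchange property: a word whose product sends the simple root `α` to a negative root can be
multiplied on the right by `s_α` by deleting one of its letters. The letter deleted is the one at
which the image of `α` changes sign. -/
lemma exchange (hΦ : IsRootSystem W Φ) (ha : IsGeneric W a)
    (hΔ : IsSimpleSystem (posSystem a Φ) Δ) {α : V} (hα : α ∈ Δ) (L : List V)
    (hL : ∀ β ∈ L, β ∈ Δ) (hneg : ⟪a, (L.map rootRefl).prod α⟫ < 0) :
    ∃ M : List V, (∀ β ∈ M, β ∈ Δ) ∧ M.length + 1 = L.length ∧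
      (M.map rootRefl).prod = (L.map rootRefl).prod * rootRefl α := by
  induction L with
  | nil =>
    have h := (hΔ.1 hα).2
    simp only [List.map_nil, List.prod_nil, LinearIsometryEquiv.coe_one, id_eq] at hneg
    linarith
  | cons β L ih =>
    have hβ : β ∈ Δ := hL β (by simp)
    have hL' : ∀ β ∈ L, β ∈ Δ := fun γ hγ => hL γ (by simp [hγ])
    rw [List.map_cons, List.prod_cons] at hneg ⊢
    have hroot : (L.map rootRefl).prod α ∈ Φ := hΦ.map_mem (word_mem hΦ hΔ L hL') (hΔ.1 hα).1
    rcases lt_or_gt_of_ne (hΦ.inner_ne_zero ha hroot) with h | h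
    · obtain ⟨M, hM, hlen, hprod⟩ := ih hL' h
      refine ⟨β :: M, ?_, by simp [hlen], by simp [hprod, mul_assoc]⟩
      intro γ hγ
      rcases List.mem_cons.1 hγ with rfl | hγ
      exacts [hβ, hM γ hγ]
    · have heq : (L.map rootRefl).prod α = β := by
        by_contra hne
        have := rootRefl_pos hΦ ha hΔ hβ ⟨hroot, h⟩ hne
        rw [isometry_mul_apply] at hneg
        linarith
      refine ⟨L, hL', rfl, ?_⟩
      rw [← heq, rootRefl_image, inv_mul_cancel_right, mul_assoc, rootRefl_mul_self, mul_one]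

/-- A generic point has trivial stabilizer in `W`. -/
lemma eq_one_of_fixes (hΦ : IsRootSystem W Φ) (ha : IsGeneric W a)
    (hΔ : IsSimpleSystem (posSystem a Φ) Δ) {x : V ≃ₗᵢ[ℝ] V} (hx : x ∈ W) (hxa : x a = a) :
    x = 1 := by
  obtain ⟨L, hL, hLx⟩ := exists_word (le_genSubgroup hΦ ha hΔ hx)
  induction hn : L.length using Nat.strong_induction_on generalizing L with
  | _ n ih =>
    rcases List.eq_nil_or_concat L with rfl | ⟨M, α, rfl⟩
    · simpa using hLx.symm
    · rw [List.concat_eq_append] at hL hLx hn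
      have hα : α ∈ Δ := hL α (by simp)
      have hM : ∀ β ∈ M, β ∈ Δ := fun β hβ => hL β (by simp [hβ])
      simp only [List.map_append, List.map_cons, List.map_nil, List.prod_append, List.prod_cons,
        List.prod_nil, mul_one] at hLx
      -- `x` fixes `a`, so `x α` is positive; dropping the last letter `s_α` flips its sign.
      have hneg : ⟪a, (M.map rootRefl).prod α⟫ < 0 := by
        have h1 : ⟪a, x α⟫ = ⟪a, α⟫ := by
          conv_lhs => rw [← hxa]
          exact x.inner_map_map a α
        rw [← hLx, isometry_mul_apply, rootRefl_self, map_neg, inner_neg_right] at h1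
        have := (hΔ.1 hα).2
        linarith
      obtain ⟨N, hN, hlen, hprod⟩ := exchange hΦ ha hΔ hα M hM hneg
      refine ih N.length ?_ N hN (hprod.trans hLx) rfl
      rw [List.length_append] at hn
      omega

end RootSystem

/-! ### Convex hulls of orbits -/

/-- A point of the convex hull of an orbit lying on the same sphere as the orbit belongs to the
orbit, because points of a sphere are extreme in the closed ball. -/
lemma mem_orbitSet_of_mem_permutahedron [Nontrivial V] {G : Subgroup (V ≃ₗᵢ[ℝ] V)} {a x : V}
    (hx : x ∈ permutahedron G a) (hn : ‖x‖ = ‖a‖) : x ∈ orbitSet G a := by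
  have hsub : permutahedron G a ⊆ Metric.closedBall 0 ‖a‖ := by
    refine convexHull_min ?_ (convex_closedBall _ _)
    rintro y ⟨u, -, rfl⟩
    simp
  refine extremePoints_convexHull_subset (𝕜 := ℝ)
    (inter_extremePoints_subset_extremePoints_of_subset hsub ⟨hx, ?_⟩)
  rw [StrictConvexSpace.extremePoints_closedBall_eq_sphere]
  simpa using hn

lemma image_permutahedron {G : Subgroup (V ≃ₗᵢ[ℝ] V)} {u : V ≃ₗᵢ[ℝ] V} (hu : u ∈ G) (a : V) :
    u '' permutahedron G a = permutahedron G a := by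
  have h1 : u '' orbitSet G a = orbitSet G a := by
    ext x
    constructor
    · rintro ⟨y, ⟨v, hv, rfl⟩, rfl⟩
      exact ⟨u * v, mul_mem hu hv, rfl⟩
    · rintro ⟨v, hv, rfl⟩
      refine ⟨(u⁻¹ * v) a, ⟨u⁻¹ * v, mul_mem (inv_mem hu) hv, rfl⟩, ?_⟩
      rw [← isometry_mul_apply, mul_inv_cancel_left]
  have h2 := LinearMap.image_convexHull (u.toLinearEquiv : V →ₗ[ℝ] V) (orbitSet G a)
  rw [permutahedron]
  conv_rhs => rw [← h1]
  exact h2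

/-- two translates of the face `F_I` coincide iff the corresponding cosets of the
standard parabolic subgroup `W_I` coincide: `w(F_I) = g(F_I) ↔ w⁻¹g ∈ W_I`. -/
theorem face_translate_eq_iff_coset_eq [FiniteDimensional ℝ V]
    (W : Subgroup (V ≃ₗᵢ[ℝ] V)) (hWfin : (W : Set (V ≃ₗᵢ[ℝ] V)).Finite)
    (Φ : Set V) (hΦ : IsRootSystem W Φ) (a : V) (ha : IsGeneric W a)
    (Δ : Set V) (hΔ : IsSimpleSystem (posSystem a Φ) Δ)
    (I : Set V) (hI : I ⊆ Δ)
    (w g : V ≃ₗᵢ[ℝ] V) (hw : w ∈ W) (hg : g ∈ W) :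
    (⇑w) '' permutahedron (genSubgroup I) a = (⇑g) '' permutahedron (genSubgroup I) a ↔
      w⁻¹ * g ∈ genSubgroup I := by
  have key : w '' permutahedron (genSubgroup I) a = g '' permutahedron (genSubgroup I) a ↔
      (w⁻¹ * g) '' permutahedron (genSubgroup I) a = permutahedron (genSubgroup I) a := by
    have hg' : ⇑g = w ∘ (w⁻¹ * g) := by
      rw [← LinearIsometryEquiv.coe_mul, mul_inv_cancel_left]
    rw [hg', Set.image_comp, w.injective.image_injective.eq_iff, eq_comm]
  rw [key]
  refine ⟨fun h => ?_, fun h => image_permutahedron h a⟩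
  obtain ⟨α₀, hα₀⟩ := hΦ.nonempty
  have : Nontrivial V := ⟨α₀, 0, hΦ.ne_zero α₀ hα₀⟩
  have hmem : (w⁻¹ * g) a ∈ permutahedron (genSubgroup I) a := by
    rw [← h]
    exact ⟨a, subset_convexHull ℝ _ ⟨1, one_mem _, rfl⟩, rfl⟩
  obtain ⟨v, hv, hva⟩ :=
    mem_orbitSet_of_mem_permutahedron hmem (LinearIsometryEquiv.norm_map _ _)
  have hvW : v ∈ W := by
    obtain ⟨L, hL, rfl⟩ := exists_word (genSubgroup_mono hI hv)
    exact word_mem hΦ hΔ L hL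
  have hfix : (v⁻¹ * (w⁻¹ * g)) a = a := by
    rw [isometry_mul_apply, hva, ← isometry_mul_apply, inv_mul_cancel]
    rfl
  have h1 := eq_one_of_fixes hΦ ha hΔ
    (mul_mem (inv_mem hvW) (mul_mem (inv_mem hw) hg)) hfix
  rw [inv_mul_eq_one] at h1
  rwa [← h1]
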